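/- Let B be a binary doubly even [36,6,16] code such that the dual code B⊥ has minimum Hamming weight 3. Then the weight enumerator of B is uniquely determined: B has exactly 27 codewords of weight 16 and exactly 36 codewords of weight 20, and every nonzero codeword of B has weight 16 or 20. -/

import Mathlib

noncomputable section

/-- The dual code `B⊥ = {x ∈ F₂ⁿ : x·y = 0 for all y ∈ B}`. -/
def dualCode {n : ℕ} (B : Submodule (ZMod 2) (Fin n → ZMod 2)) : Set (Fin n → ZMod 2) :=
  {x | ∀ y ∈ B, ∑ i, x i * y i = 0}

/-- A binary code is doubly even if every codeword has Hamming weight divisible by 4. -/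
def IsDoublyEven {n : ℕ} (B : Submodule (ZMod 2) (Fin n → ZMod 2)) : Prop :=
  ∀ c ∈ B, 4 ∣ hammingNorm c

/-- A set of binary words has minimum weight `d`:
`d` is the least Hamming weight among its nonzero elements. -/
def HasMinWeight {n : ℕ} (S : Set (Fin n → ZMod 2)) (d : ℕ) : Prop :=
  IsLeast {w : ℕ | ∃ c ∈ S, c ≠ 0 ∧ hammingNorm c = w} d

/-- The number of words of Hamming weight `w` in `S`. -/
def weightCount {n : ℕ} (S : Set (Fin n → ZMod 2)) (w : ℕ) : ℕ :=
  Set.ncard {c ∈ S | hammingNorm c = w}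

/-!
For a binary code `B` of length `n`, expand `n - 2 wt(c) = ∑ᵢ (-1)^{cᵢ}`. Since a character
`c ↦ (-1)^{u·c}` sums to zero over `B` unless `u ∈ B⊥`, the absence of words of weight one and two
in `B⊥` gives `∑_c (n - 2 wt(c)) = 0` and `∑_c (n - 2 wt(c))² = n |B|`. If `n = 36`, double evenness
makes `(36 - 2 wt(c))²` at least `4²`, because `9 - wt(c) / 2` is odd. Over the nonzero words these
squares sum to `36 |B| - 36²`, which is at most `4² (|B| - 1)` when `|B| ≤ 2⁶`; hence every square
equals `4²` and the nonzero weights are `18 ± 2`. The moments then determine the multiplicities.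
-/

/-- A code is projective if its dual has minimum weight at least three. Equivalently, the columns
of a generator matrix are nonzero and pairwise distinct, i.e. distinct points of a projective
space over `F₂`. -/
def IsProjectiveCode {n : ℕ} (B : Submodule (ZMod 2) (Fin n → ZMod 2)) : Prop :=
  ∀ u ∈ dualCode B, u ≠ 0 → 3 ≤ hammingNorm u

/-- The nontrivial additive character `x ↦ (-1)ˣ` of `F₂`. It is integer-valued so that weight
identities can be compared by linear arithmetic. -/
def signChar : AddChar (ZMod 2) ℤ :=
  AddChar.zmodChar 2 (ζ := -1) (by norm_num)

lemma signChar_eq_one_iff (x : ZMod 2) : signChar x = 1 ↔ x = 0 := by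
  revert x; decide

lemma signChar_mul_self (x : ZMod 2) : signChar x * signChar x = 1 := by
  rw [← AddChar.map_add_eq_mul, CharTwo.add_self_eq_zero, AddChar.map_zero_eq_one]

lemma signChar_eq_sub (x : ZMod 2) : signChar x = 1 - 2 * if x ≠ 0 then 1 else 0 := by
  revert x; decide

lemma sum_signChar {ι : Type*} [Fintype ι] (c : ι → ZMod 2) :
    ∑ i, signChar (c i) = Fintype.card ι - 2 * (hammingNorm c : ℤ) := by
  simp only [signChar_eq_sub, Finset.sum_sub_distrib, ← Finset.mul_sum, Finset.sum_boole,
    hammingNorm]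
  simp

lemma hammingNorm_single_add_single_le {ι R : Type*} [Fintype ι] [DecidableEq ι]
    [AddZeroClass R] [DecidableEq R] (i j : ι) (a b : R) :
    hammingNorm (Pi.single i a + Pi.single j b : ι → R) ≤ 2 := by
  refine (Finset.card_le_card (t := {i, j}) fun k hk ↦ ?_).trans Finset.card_le_two
  contrapose! hk
  simp_all

section Moments

variable {n : ℕ} {B : Submodule (ZMod 2) (Fin n → ZMod 2)}

lemma IsProjectiveCode.single_notMem_dualCode (hB : IsProjectiveCode B) (i : Fin n) :
    Pi.single i 1 ∉ dualCode B := fun hi ↦ by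
  have hle := hammingNorm_single_add_single_le i i (1 : ZMod 2) 0
  rw [Pi.single_zero, add_zero] at hle
  have hge := hB _ hi (by simp)
  omega

lemma IsProjectiveCode.single_add_single_notMem_dualCode (hB : IsProjectiveCode B) {i j : Fin n}
    (hij : i ≠ j) : Pi.single i 1 + Pi.single j 1 ∉ dualCode B := fun hmem ↦ by
  have hne : (Pi.single i 1 + Pi.single j 1 : Fin n → ZMod 2) ≠ 0 := fun h ↦ by
    simpa [hij] using congrFun h i
  have hle := hammingNorm_single_add_single_le i j (1 : ZMod 2) 1
  have hge := hB _ hmem hne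
  omega

variable [Fintype B]

lemma sum_signChar_dotProduct_eq_zero {u : Fin n → ZMod 2} (hu : u ∉ dualCode B) :
    ∑ c : B, signChar (u ⬝ᵥ c) = 0 := by
  let ψ : AddChar B ℤ := signChar.compAddMonoidHom
    ((dotProductBilin (ZMod 2) (ZMod 2) u).comp B.subtype).toAddMonoidHom
  refine (AddChar.sum_eq_zero_iff_ne_zero (ψ := ψ)).2 fun hψ ↦ hu fun y hy ↦ ?_
  exact (signChar_eq_one_iff _).1 (DFunLike.congr_fun hψ (⟨y, hy⟩ : B))

lemma sum_signChar_apply_eq_zero {i : Fin n} (hi : Pi.single i 1 ∉ dualCode B) :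
    ∑ c : B, signChar (c.1 i) = 0 := by
  simpa using sum_signChar_dotProduct_eq_zero hi

lemma sum_signChar_apply_mul_apply_eq_zero {i j : Fin n}
    (hij : Pi.single i 1 + Pi.single j 1 ∉ dualCode B) :
    ∑ c : B, signChar (c.1 i) * signChar (c.1 j) = 0 := by
  simpa [add_dotProduct, AddChar.map_add_eq_mul] using sum_signChar_dotProduct_eq_zero hij

theorem sum_sub_two_mul_hammingNorm_eq_zero (h : ∀ i, Pi.single i 1 ∉ dualCode B) :
    ∑ c : B, ((n : ℤ) - 2 * hammingNorm c.1) = 0 := by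
  calc ∑ c : B, ((n : ℤ) - 2 * hammingNorm c.1)
      = ∑ c : B, ∑ i, signChar (c.1 i) := by simp only [sum_signChar, Fintype.card_fin]
    _ = ∑ i, ∑ c : B, signChar (c.1 i) := Finset.sum_comm
    _ = 0 := Finset.sum_eq_zero fun i _ ↦ sum_signChar_apply_eq_zero (h i)

theorem sum_sub_two_mul_hammingNorm_sq
    (h : Pairwise fun i j ↦ Pi.single i 1 + Pi.single j 1 ∉ dualCode B) :
    ∑ c : B, ((n : ℤ) - 2 * hammingNorm c.1) ^ 2 = (n * Fintype.card B : ℤ) := by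
  have hrow (i : Fin n) :
      ∑ j, ∑ c : B, signChar (c.1 i) * signChar (c.1 j) = Fintype.card B := by
    rw [Fintype.sum_eq_single i fun j hji ↦ sum_signChar_apply_mul_apply_eq_zero (h hji.symm)]
    simp [signChar_mul_self]
  calc ∑ c : B, ((n : ℤ) - 2 * hammingNorm c.1) ^ 2
      = ∑ c : B, ∑ i, ∑ j, signChar (c.1 i) * signChar (c.1 j) := by
        simp only [← Finset.sum_mul_sum, sum_signChar, Fintype.card_fin, sq]
    _ = ∑ i, ∑ j, ∑ c : B, signChar (c.1 i) * signChar (c.1 j) := by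
        rw [Finset.sum_comm]
        exact Finset.sum_congr rfl fun i _ ↦ Finset.sum_comm
    _ = n * Fintype.card B := by simp [hrow]

theorem sq_sub_two_mul_hammingNorm_eq_of_le {m : ℤ}
    (hB : Pairwise fun i j ↦ Pi.single i 1 + Pi.single j 1 ∉ dualCode B)
    (hcard : (n * Fintype.card B - n ^ 2 : ℤ) ≤ m ^ 2 * (Fintype.card B - 1))
    (hgap : ∀ c ∈ B, c ≠ 0 → m ^ 2 ≤ ((n : ℤ) - 2 * hammingNorm c) ^ 2)
    {c : Fin n → ZMod 2} (hc : c ∈ B) (hc₀ : c ≠ 0) :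
    ((n : ℤ) - 2 * hammingNorm c) ^ 2 = m ^ 2 := by
  classical
  let excess (c : B) : ℤ := ((n : ℤ) - 2 * hammingNorm c.1) ^ 2 - m ^ 2
  have hnonneg : ∀ c ∈ Finset.univ.erase (0 : B), 0 ≤ excess c := fun c hc ↦
    sub_nonneg.2 <| hgap c c.2 fun h ↦ Finset.ne_of_mem_erase hc (Subtype.ext h)
  have hsum : ∑ c ∈ Finset.univ.erase 0, excess c ≤ 0 := by
    have hsplit := Finset.add_sum_erase Finset.univ excess (Finset.mem_univ 0)
    have htotal : ∑ c, excess c = n * Fintype.card B - Fintype.card B * m ^ 2 := by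
      simp [excess, Finset.sum_sub_distrib, sum_sub_two_mul_hammingNorm_sq hB]
    have hzero : excess 0 = n ^ 2 - m ^ 2 := by simp [excess]
    linarith
  have hvanish := (Finset.sum_eq_zero_iff_of_nonneg hnonneg).1
    (hsum.antisymm (Finset.sum_nonneg hnonneg))
  exact sub_eq_zero.1 <| hvanish ⟨c, hc⟩ (by simpa [Subtype.ext_iff] using hc₀)

end Moments

section WeightCount

variable {n : ℕ} {B : Submodule (ZMod 2) (Fin n → ZMod 2)}

lemma weightCount_zero : weightCount (B : Set (Fin n → ZMod 2)) 0 = 1 := by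
  rw [weightCount, Set.ncard_eq_one]
  refine ⟨0, Set.ext fun c ↦ ?_⟩
  simp +contextual [hammingNorm_eq_zero, B.zero_mem]

lemma weightCount_eq_card_filter [Fintype B] (w : ℕ) :
    weightCount (B : Set (Fin n → ZMod 2)) w
      = (Finset.univ.filter fun c : B ↦ hammingNorm c.1 = w).card := by
  rw [weightCount, ← Set.ncard_coe_finset, ← Set.ncard_image_of_injective _ Subtype.val_injective]
  congr 1
  ext c
  simp [and_comm]

lemma sum_comp_hammingNorm_eq_sum_weightCount [Fintype B] {M : Type*} [AddCommMonoid M]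
    {S : Finset ℕ} (hS : ∀ c ∈ B, hammingNorm c ∈ S) (f : ℕ → M) :
    ∑ c : B, f (hammingNorm c.1) =
      ∑ w ∈ S, weightCount (B : Set (Fin n → ZMod 2)) w • f w := by
  rw [← Finset.sum_fiberwise_of_maps_to' (t := S) (g := fun c : B ↦ hammingNorm c.1)
    (fun c _ ↦ hS c c.2)]
  simp only [Finset.sum_const, weightCount_eq_card_filter]

lemma sum_comp_hammingNorm_of_two_weights [Fintype B] {M : Type*} [AddCommMonoid M] {w₁ w₂ : ℕ}
    (hw₁ : w₁ ≠ 0) (hw₂ : w₂ ≠ 0) (hw : w₁ ≠ w₂)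
    (hB : ∀ c ∈ B, c ≠ 0 → hammingNorm c = w₁ ∨ hammingNorm c = w₂) (f : ℕ → M) :
    ∑ c : B, f (hammingNorm c.1) =
      f 0 + weightCount (B : Set (Fin n → ZMod 2)) w₁ • f w₁ +
        weightCount (B : Set (Fin n → ZMod 2)) w₂ • f w₂ := by
  have hmem : ∀ c ∈ B, hammingNorm c ∈ ({0, w₁, w₂} : Finset ℕ) := fun c hc ↦ by
    rcases eq_or_ne c 0 with rfl | hc₀
    · simp
    · rcases hB c hc hc₀ with h | h <;> simp [h]
  rw [sum_comp_hammingNorm_eq_sum_weightCount hmem,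
    Finset.sum_insert (by simp [hw₁.symm, hw₂.symm]), Finset.sum_pair hw, weightCount_zero,
    one_nsmul, add_assoc]

end WeightCount

lemma IsDoublyEven.four_sq_le_sub_two_mul_hammingNorm_sq {n : ℕ}
    {B : Submodule (ZMod 2) (Fin n → ZMod 2)} (hB : IsDoublyEven B) (hn : n % 8 = 4)
    {c : Fin n → ZMod 2} (hc : c ∈ B) :
    4 ^ 2 ≤ ((n : ℤ) - 2 * hammingNorm c) ^ 2 := by
  have hdvd := hB c hc
  rw [sq_le_sq, abs_of_pos four_pos]
  exact le_abs.2 (by omega)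

theorem IsDoublyEven.hammingNorm_eq_sixteen_or_twenty {B : Submodule (ZMod 2) (Fin 36 → ZMod 2)}
    (hde : IsDoublyEven B) (hdim : Module.finrank (ZMod 2) B ≤ 6) (hproj : IsProjectiveCode B)
    {c : Fin 36 → ZMod 2} (hc : c ∈ B) (hc₀ : c ≠ 0) :
    hammingNorm c = 16 ∨ hammingNorm c = 20 := by
  have := Fintype.ofFinite B
  have hcard : Fintype.card B ≤ 2 ^ 6 := by
    rw [Module.card_eq_pow_finrank (K := ZMod 2), ZMod.card]
    exact Nat.pow_le_pow_right two_pos hdim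
  have hsq := sq_sub_two_mul_hammingNorm_eq_of_le (m := 4)
    (fun _ _ ↦ hproj.single_add_single_notMem_dualCode) (by push_cast; omega)
    (fun _ hc _ ↦ hde.four_sq_le_sub_two_mul_hammingNorm_sq rfl hc) hc hc₀
  rcases sq_eq_sq_iff_eq_or_eq_neg.1 hsq with h | h <;> omega

theorem weight_enumerator_36_6_16_general {B : Submodule (ZMod 2) (Fin 36 → ZMod 2)}
    (hdim : Module.finrank (ZMod 2) B ≤ 6) (hde : IsDoublyEven B) (hproj : IsProjectiveCode B) :
    weightCount (B : Set (Fin 36 → ZMod 2)) 16 = 27 ∧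
      weightCount (B : Set (Fin 36 → ZMod 2)) 20 = 36 ∧
      ∀ c ∈ B, c ≠ 0 → hammingNorm c = 16 ∨ hammingNorm c = 20 := by
  have := Fintype.ofFinite B
  have hweights : ∀ c ∈ B, c ≠ 0 → hammingNorm c = 16 ∨ hammingNorm c = 20 :=
    fun _ hc hc₀ ↦ hde.hammingNorm_eq_sixteen_or_twenty hdim hproj hc hc₀
  have htwo (f : ℕ → ℤ) := sum_comp_hammingNorm_of_two_weights (by norm_num) (by norm_num)
    (by norm_num) hweights f
  set A := weightCount (B : Set (Fin 36 → ZMod 2))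
  have hcount : (Fintype.card B : ℤ) = 1 + A 16 + A 20 := by simpa using htwo fun _ ↦ 1
  have hfirst : (36 + A 16 * 4 + A 20 * -4 : ℤ) = 0 := by
    simpa [htwo fun w ↦ 36 - 2 * w] using
      sum_sub_two_mul_hammingNorm_eq_zero hproj.single_notMem_dualCode
  have hsecond : (36 ^ 2 + A 16 * 16 + A 20 * 16 : ℤ) = 36 * Fintype.card B := by
    simpa [htwo fun w ↦ (36 - 2 * w) ^ 2] using
      sum_sub_two_mul_hammingNorm_sq fun _ _ ↦ hproj.single_add_single_notMem_dualCode
  exact ⟨by omega, by omega, hweights⟩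

theorem weight_enumerator_36_6_16 {B : Submodule (ZMod 2) (Fin 36 → ZMod 2)}
    (hdim : Module.finrank (ZMod 2) B = 6)
    (hde : IsDoublyEven B)
    (hmin : HasMinWeight (B : Set (Fin 36 → ZMod 2)) 16)
    (hdual : HasMinWeight (dualCode B) 3) :
    weightCount (B : Set (Fin 36 → ZMod 2)) 16 = 27 ∧
      weightCount (B : Set (Fin 36 → ZMod 2)) 20 = 36 ∧
      ∀ c ∈ B, c ≠ 0 → hammingNorm c = 16 ∨ hammingNorm c = 20 := by
  exact weight_enumerator_36_6_16_general hdim.le hde fun u hu hu₀ ↦ hdual.2 ⟨u, hu, hu₀, rfl⟩
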